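/- Let f : 𝕋 × ℝ^d → ℝ^d be continuous in θ, continuously differentiable in u (jointly continuously), and 1-periodic in θ; write ⟨f⟩(u) = ∫₀¹ f_θ(u) dθ. Let ε > 0 and let Φ : 𝕋 × ℝ^d → ℝ^d be continuously differentiable in (θ,u) and 1-periodic in θ, such that ⟨Φ⟩ : ℝ^d → ℝ^d is a C¹ diffeomorphism of ℝ^d with ∂_u⟨Φ⟩(u) invertible for all u. Define F(u) = (∂_u⟨Φ⟩(u))^{-1} ⟨f∘Φ⟩(u), the defect δ_θ(u) = (1/ε)∂_θΦ_θ(u) + ∂_uΦ_θ(u) F(u) − f_θ(Φ_θ(u)), and set Φ̃_θ = Φ_θ ∘ ⟨Φ⟩^{-1}, F̃(u) = (∂_u⟨Φ̃⟩(u))^{-1} ⟨f∘Φ̃⟩(u), δ̃_θ(u) = (1/ε)∂_θΦ̃_θ(u) + ∂_uΦ̃_θ(u) F̃(u) − f_θ(Φ̃_θ(u)). Then ⟨Φ̃⟩ = id on ℝ^d and δ̃_θ = δ_θ ∘ ⟨Φ⟩^{-1} for every θ ∈ 𝕋. -/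

import Mathlib

open Set

/-- θ-average `⟨g⟩(u) = ∫₀¹ g_θ(u) dθ`. -/
noncomputable def thAvg (d : ℕ) (g : ℝ → (Fin d → ℝ) → (Fin d → ℝ))
    (u : Fin d → ℝ) : Fin d → ℝ :=
  ∫ θ in (0:ℝ)..1, g θ u

/-- Averaged vector field `F(u) = (∂_u⟨Φ⟩(u))⁻¹ ⟨f∘Φ⟩(u)`. -/
noncomputable def aveField (d : ℕ) (f Φ : ℝ → (Fin d → ℝ) → (Fin d → ℝ))
    (u : Fin d → ℝ) : Fin d → ℝ :=
  (fderiv ℝ (thAvg d Φ) u).inverse (thAvg d (fun θ v => f θ (Φ θ v)) u)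

/-- The defect `δ_θ(u) = (1/ε)∂_θΦ_θ(u) + ∂_uΦ_θ(u) F(u) − f_θ(Φ_θ(u))`. -/
noncomputable def defect (d : ℕ) (f Φ : ℝ → (Fin d → ℝ) → (Fin d → ℝ))
    (ε θ : ℝ) (u : Fin d → ℝ) : Fin d → ℝ :=
  (1/ε) • deriv (fun τ => Φ τ u) θ
    + fderiv ℝ (Φ θ) u (aveField d f Φ u)
    - f θ (Φ θ u)

/-- Relating stroboscopic to standard averaging: setting `Φ̃_θ = Φ_θ ∘ ⟨Φ⟩⁻¹`, one has
`⟨Φ̃⟩ = id` and the defects satisfy `δ̃_θ = δ_θ ∘ ⟨Φ⟩⁻¹`. -/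
theorem statement12 (d : ℕ)
    (f : ℝ → (Fin d → ℝ) → (Fin d → ℝ))
    (hfcont : Continuous fun p : ℝ × (Fin d → ℝ) => f p.1 p.2)
    (hfdiff : ∀ θ, ContDiff ℝ 1 (f θ))
    (hfdcont : Continuous fun p : ℝ × (Fin d → ℝ) => fderiv ℝ (f p.1) p.2)
    (hfper : ∀ u, Function.Periodic (fun θ => f θ u) 1)
    (ε : ℝ) (hε : 0 < ε)
    (Φ : ℝ → (Fin d → ℝ) → (Fin d → ℝ))
    (hΦ : ContDiff ℝ 1 fun p : ℝ × (Fin d → ℝ) => Φ p.1 p.2)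
    (hΦper : ∀ u, Function.Periodic (fun θ => Φ θ u) 1)
    -- ⟨Φ⟩ is a C¹ diffeomorphism of ℝ^d with inverse Ψ and invertible derivative
    (Ψ : (Fin d → ℝ) → (Fin d → ℝ)) (hΨ : ContDiff ℝ 1 Ψ)
    (hΨl : ∀ u, Ψ (thAvg d Φ u) = u)
    (hΨr : ∀ u, thAvg d Φ (Ψ u) = u)
    (hinv : ∀ u, ∃ e : (Fin d → ℝ) ≃L[ℝ] (Fin d → ℝ),
      (e : (Fin d → ℝ) →L[ℝ] (Fin d → ℝ)) = fderiv ℝ (thAvg d Φ) u) :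
    -- ⟨Φ̃⟩ = id
    (∀ u, thAvg d (fun θ w => Φ θ (Ψ w)) u = u) ∧
    -- δ̃_θ = δ_θ ∘ ⟨Φ⟩⁻¹
    (∀ θ : ℝ, ∀ u : Fin d → ℝ,
      defect d f (fun τ w => Φ τ (Ψ w)) ε θ u = defect d f Φ ε θ (Ψ u)) := by
  have h1 : ∀ u, thAvg d (fun θ w => Φ θ (Ψ w)) u = u := fun u => hΨr u
  refine ⟨h1, ?_⟩
  intro θ u
  obtain ⟨e, he⟩ := hinv (Ψ u)
  have hdiff : DifferentiableAt ℝ (thAvg d Φ) (Ψ u) := by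
    by_contra hn
    rw [fderiv_zero_of_not_differentiableAt hn] at he
    have hz : ∀ x : Fin d → ℝ, x = 0 := by
      intro x
      have hx := DFunLike.congr_fun he (e.symm x)
      simpa using hx
    have : Subsingleton (Fin d → ℝ) := ⟨fun x y => by rw [hz x, hz y]⟩
    apply hn
    have hc : thAvg d Φ = fun _ => 0 := funext fun x => hz _
    rw [hc]
    exact differentiableAt_const _
  have hΨd : DifferentiableAt ℝ Ψ u := (hΨ.differentiable one_ne_zero) u
  have hΦd : DifferentiableAt ℝ (Φ θ) (Ψ u) := by
    have h2 : Differentiable ℝ fun p : ℝ × (Fin d → ℝ) => Φ p.1 p.2 :=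
      hΦ.differentiable one_ne_zero
    have h3 : DifferentiableAt ℝ (fun w : Fin d → ℝ => (θ, w)) (Ψ u) := by fun_prop
    exact (h2 (θ, Ψ u)).comp (Ψ u) h3
  have hid : thAvg d (fun θ w => Φ θ (Ψ w)) = id := funext h1
  have hcomp : (fderiv ℝ (thAvg d Φ) (Ψ u)).comp (fderiv ℝ Ψ u)
      = ContinuousLinearMap.id ℝ (Fin d → ℝ) := by
    rw [← fderiv_comp u hdiff hΨd]
    have h4 : thAvg d Φ ∘ Ψ = id := funext hΨr
    rw [h4, fderiv_id]
  have hfield : fderiv ℝ Ψ u (aveField d f (fun τ w => Φ τ (Ψ w)) u)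
      = aveField d f Φ (Ψ u) := by
    unfold aveField
    rw [hid, fderiv_id, ContinuousLinearMap.inverse_id, ← he,
      ContinuousLinearMap.inverse_equiv]
    rw [← he] at hcomp
    have h5 : thAvg d (fun θ v => f θ (Φ θ (Ψ v))) u
      = thAvg d (fun θ v => f θ (Φ θ v)) (Ψ u) := rfl
    have h6 := DFunLike.congr_fun hcomp (thAvg d (fun θ v => f θ (Φ θ (Ψ v))) u)
    rw [← h5]
    apply e.injective
    simpa using h6
  have hch : fderiv ℝ (fun w => Φ θ (Ψ w)) u
      = (fderiv ℝ (Φ θ) (Ψ u)).comp (fderiv ℝ Ψ u) := fderiv_comp u hΦd hΨd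
  unfold defect
  rw [hch, ContinuousLinearMap.comp_apply, hfield]
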